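/- arXiv:1912.08951 — 2 statements merged into one kernel-verified Lean document; each statement's English description precedes it below -/
import Mathlib

section
/- Let c, d, m ∈ ℕ with d ≤ c. For every (not necessarily differentially private) randomized algorithm A taking m data points of the 1-out-of-2^d-parity task and outputting an element of {0,1}^c, there exists an instance — pairwise distinct strings (r_j)_{j∈{0,1}^d} in {0,1}^c and shares s_1,…,s_{m+1} ∈ {0,1}^d — such that the probability that A outputs r_s is at most 2^{−d}, where the probability is over the m i.i.d. data points generated from the instance and A's coins. In particular, a trusted curator holding only m examples cannot solve the 1-out-of-2^d-parity task with success probability 3/4 when d ≥ 2. -/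
open scoped ENNReal

/-- Two databases of size `m` are neighboring if they differ in at most one entry. -/
def Neighbor {X : Type*} {m : ℕ} (x x' : Fin m → X) : Prop :=
  ∃ i : Fin m, ∀ j : Fin m, j ≠ i → x j = x' j

/-- The probability that a sample from `P` lands in the set `T`. -/
noncomputable def prOf {Y : Type*} (P : PMF Y) (T : Set Y) : ℝ≥0∞ :=
  P.toOuterMeasure T

/-- `ε`-differential privacy for a mechanism operating on databases of size `m`. -/
def DPAlg {X Y : Type*} {m : ℕ} (ε : ℝ) (A : (Fin m → X) → PMF Y) : Prop :=
  ∀ x x' : Fin m → X, Neighbor x x' → ∀ T : Set Y,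
    prOf (A x) T ≤ ENNReal.ofReal (Real.exp ε) * prOf (A x') T

/-- `ε`-differential privacy for a local randomizer. -/
def DPRand {X Y : Type*} (ε : ℝ) (R : X → PMF Y) : Prop :=
  ∀ x x' : X, ∀ T : Set Y,
    prOf (R x) T ≤ ENNReal.ofReal (Real.exp ε) * prOf (R x') T

/-- `m` i.i.d. samples from the distribution `D`. -/
noncomputable def iid {Z : Type*} (D : PMF Z) : (m : ℕ) → PMF (Fin m → Z)
  | 0 => PMF.pure (fun i => i.elim0)
  | m + 1 => (iid D m).bind fun f => D.bind fun z => PMF.pure (Fin.cons z f)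

/-- Independent product of finitely many PMFs. -/
noncomputable def pmfPi : (n : ℕ) → {T : Fin n → Type} → (∀ i, PMF (T i)) → PMF (∀ i, T i)
  | 0, _, _ => PMF.pure (fun i => i.elim0)
  | n + 1, T, P =>
      (P 0).bind fun t0 =>
        (@pmfPi n (fun i => T i.succ) (fun i => P i.succ)).bind fun ts =>
          PMF.pure (Fin.cons t0 ts)

/-- XOR of a finite family of bits. -/
def xorFold {I : Type*} [Fintype I] (f : I → Bool) : Bool :=
  decide ((Finset.univ.filter (fun i => f i = true)).card % 2 = 1)

/-- The parity function `Par_k(x) = ⊕ k_i x_i`. -/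
def Par {c : ℕ} (k x : Fin c → Bool) : Bool := xorFold (fun i => k i && x i)

/-- Interpret a bit string as an integer in `{0, …, 2^b − 1}`. -/
def bitsToNat {b : ℕ} (y : Fin b → Bool) : ℕ :=
  ∑ i : Fin b, if y i then 2 ^ (i : ℕ) else 0

/-- The threshold function `Thr_t(y) = 1` iff `y ≥ t`. -/
def Thr {b : ℕ} (t y : Fin b → Bool) : Bool := decide (bitsToNat t ≤ bitsToNat y)

/-- Generalization error of hypothesis `h` w.r.t. target `c` under distribution `D`. -/
noncomputable def errD {Z L : Type*} (D : PMF Z) (c h : Z → L) : ℝ≥0∞ :=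
  prOf D {z | h z ≠ c z}

/-- `(α, β)`-PAC learning for the concept class `C` with sample complexity `m`:
for every concept in `C` and distribution `D` on the domain, when the `m` examples are drawn
i.i.d. from `D` and labeled by the concept, with probability at least `1 − β` the output
hypothesis has generalization error at most `α`. -/
def PACLearner {Z L : Type*} {m : ℕ} (α β : ℝ) (C : Set (Z → L))
    (A : (Fin m → Z × L) → PMF (Z → L)) : Prop :=
  ∀ c ∈ C, ∀ D : PMF Z,
    ENNReal.ofReal (1 - β) ≤
      prOf ((iid D m).bind fun s => A (fun i => (s i, c (s i))))
        {h | errD D c h ≤ ENNReal.ofReal α}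

/-- A data point of the 1-out-of-`2^d`-parity task: either `(x, (⟨x,r_j⟩)_j)` or `(t, s_t)`. -/
abbrev ParPoint (c d m : ℕ) : Type :=
  ((Fin c → Bool) × ((Fin d → Bool) → Bool)) ⊕ (Fin (m + 1) × (Fin d → Bool))

/-- The secret index `s = s_1 ⊕ ⋯ ⊕ s_{m+1}` determined by the shares. -/
def sOf {d m : ℕ} (sh : Fin (m + 1) → Fin d → Bool) : Fin d → Bool :=
  fun j => xorFold fun t => sh t j

/-- The data-point distribution of the 1-out-of-`2^d`-parity task. -/
noncomputable def oneOutDist (c d m : ℕ) (r : (Fin d → Bool) → Fin c → Bool)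
    (sh : Fin (m + 1) → Fin d → Bool) : PMF (ParPoint c d m) :=
  (PMF.uniformOfFintype Bool).bind fun flip =>
    if flip then
      (PMF.uniformOfFintype (Fin c → Bool)).map fun x => Sum.inl (x, fun j => Par (r j) x)
    else
      (PMF.uniformOfFintype (Fin (m + 1))).map fun t => Sum.inr (t, sh t)

/-- Toggling one bit of a family by `b` toggles its XOR by `b`. -/
lemma xorFold_update_xor {I : Type*} [Fintype I] [DecidableEq I] (f : I → Bool) (t : I) (b : Bool) :
    xorFold (Function.update f t (xor (f t) b)) = xor (xorFold f) b := by
  have key : ∀ g : I → Bool, (Finset.univ.filter fun i => g i = true).card =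
      (if g t = true then 1 else 0) + ∑ i ∈ Finset.univ.erase t, if g i = true then 1 else 0 := by
    intro g
    rw [Finset.card_filter, Finset.add_sum_erase _ (fun i => if g i = true then 1 else 0)
      (Finset.mem_univ t)]
  have rest : (∑ i ∈ Finset.univ.erase t,
        if Function.update f t (xor (f t) b) i = true then 1 else 0) =
      ∑ i ∈ Finset.univ.erase t, if f i = true then 1 else 0 := by
    refine Finset.sum_congr rfl fun i hi => ?_
    rw [Function.update_of_ne (Finset.ne_of_mem_erase hi)]
  unfold xorFold
  rw [key, key f, rest, Function.update_self]
  generalize (∑ i ∈ Finset.univ.erase t, if f i = true then 1 else 0) = n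
  cases f t <;> cases b <;> simp <;> grind

/-- The shares obtained by XORing the string `a` into the share `t`. -/
def toggleShare {d m : ℕ} (t : Fin (m + 1)) (a : Fin d → Bool)
    (sh : Fin (m + 1) → Fin d → Bool) : Fin (m + 1) → Fin d → Bool :=
  Function.update sh t fun j => xor (sh t j) (a j)

lemma toggleShare_involutive {d m : ℕ} (t : Fin (m + 1)) (a : Fin d → Bool) :
    Function.Involutive (toggleShare (m := m) t a) := by
  intro sh
  simp [toggleShare]

lemma sOf_toggleShare {d m : ℕ} (t : Fin (m + 1)) (a : Fin d → Bool)
    (sh : Fin (m + 1) → Fin d → Bool) :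
    sOf (toggleShare t a sh) = fun j => xor (sOf sh j) (a j) := by
  funext j
  unfold sOf
  rw [← xorFold_update_xor _ t]
  congr 1
  funext i
  by_cases h : i = t
  · subst h; simp [toggleShare]
  · simp [toggleShare, h]

lemma iid_apply {Z : Type*} (D : PMF Z) : ∀ (m : ℕ) (z : Fin m → Z), iid D m z = ∏ i, D (z i)
  | 0, z => by
      rw [iid, PMF.pure_apply, if_pos (Subsingleton.elim _ _)]
      simp
  | m + 1, z => by
      classical
      have inner : ∀ f : Fin m → Z, (D.bind fun y => PMF.pure (Fin.cons y f : Fin (m + 1) → Z)) z =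
          if f = Fin.tail z then D (z 0) else 0 := by
        intro f
        rw [PMF.bind_apply, tsum_eq_single (z 0)]
        · by_cases h : f = Fin.tail z
          · subst h; simp
          · have hne : z ≠ Fin.cons (z 0) f := by
              intro e
              apply h
              rw [e, Fin.tail_cons]
            simp [h, hne]
        · intro y hy
          have hne : z ≠ Fin.cons y f := by
            intro e
            apply hy
            rw [e, Fin.cons_zero]
          simp [hne]
      rw [iid, PMF.bind_apply, tsum_eq_single (Fin.tail z), inner, if_pos rfl,
        iid_apply D m, Fin.prod_univ_succ, mul_comm]
      · rfl
      · intro f hf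
        rw [inner, if_neg hf, mul_zero]

/-- A data point that does not reveal share `t` is equally likely after toggling share `t`. -/
lemma oneOutDist_toggleShare {c d m : ℕ} (r : (Fin d → Bool) → Fin c → Bool)
    (sh : Fin (m + 1) → Fin d → Bool) (t : Fin (m + 1)) (a : Fin d → Bool)
    (z : ParPoint c d m) (hz : ∀ y, z ≠ Sum.inr (t, y)) :
    oneOutDist c d m r (toggleShare t a sh) z = oneOutDist c d m r sh z := by
  unfold oneOutDist
  simp only [PMF.bind_apply]
  refine tsum_congr fun flip => ?_
  cases flip
  · simp only [Bool.false_eq_true, if_false, PMF.map_apply]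
    congr 1
    refine tsum_congr fun t' => ?_
    by_cases h : t' = t
    · subst h; simp [hz]
    · simp [toggleShare, h]
  · simp

lemma exists_share_not_mem {c d m : ℕ} (z : Fin m → ParPoint c d m) :
    ∃ t : Fin (m + 1), ∀ i y, z i ≠ Sum.inr (t, y) := by
  by_contra! h
  choose i y hiy using h
  have hinj : Function.Injective i := by
    intro t t' e
    have h1 := hiy t
    rw [e, hiy t'] at h1
    simpa using (congrArg Prod.fst (Sum.inr.inj h1)).symm
  simpa using Fintype.card_le_of_injective i hinj

/-- Averaged over the shares, any fixed data set helps to hit `r_s` no better than guessing. -/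
lemma sum_iid_mul_le {c d m : ℕ} (r : (Fin d → Bool) → Fin c → Bool) (hr : Function.Injective r)
    (P : PMF (Fin c → Bool)) (z : Fin m → ParPoint c d m) :
    2 ^ d * ∑ sh, iid (oneOutDist c d m r sh) m z * P (r (sOf sh)) ≤
      ∑ sh, iid (oneOutDist c d m r sh) m z := by
  obtain ⟨t, ht⟩ := exists_share_not_mem z
  have shift : ∀ a : Fin d → Bool,
      ∑ sh, iid (oneOutDist c d m r sh) m z * P (r (sOf sh)) =
        ∑ sh, iid (oneOutDist c d m r sh) m z * P (r fun j => xor (sOf sh j) (a j)) := by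
    intro a
    rw [← Equiv.sum_comp (toggleShare_involutive t a).toPerm]
    refine Finset.sum_congr rfl fun sh _ => ?_
    simp only [Function.Involutive.coe_toPerm, sOf_toggleShare, iid_apply]
    congr 1
    exact Finset.prod_congr rfl fun i _ => oneOutDist_toggleShare r sh t a (z i) (ht i)
  calc 2 ^ d * ∑ sh, iid (oneOutDist c d m r sh) m z * P (r (sOf sh))
      = ∑ _a : Fin d → Bool, ∑ sh, iid (oneOutDist c d m r sh) m z * P (r (sOf sh)) := by simp
    _ = ∑ a : Fin d → Bool, ∑ sh,
          iid (oneOutDist c d m r sh) m z * P (r fun j => xor (sOf sh j) (a j)) :=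
        Finset.sum_congr rfl fun a _ => shift a
    _ = ∑ sh, iid (oneOutDist c d m r sh) m z *
          ∑ a : Fin d → Bool, P (r fun j => xor (sOf sh j) (a j)) := by
        rw [Finset.sum_comm]
        simp only [Finset.mul_sum]
    _ ≤ ∑ sh, iid (oneOutDist c d m r sh) m z := by
        refine Finset.sum_le_sum fun sh _ => mul_le_of_le_one_right' ?_
        have hinj : Function.Injective fun a : Fin d → Bool =>
            r fun j => xor (sOf sh j) (a j) := by
          intro a b e
          funext j
          simpa using congrFun (hr e) j
        rw [← tsum_fintype (L := .unconditional _), ← P.tsum_coe]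
        exact ENNReal.tsum_comp_le_tsum_of_injective hinj P

lemma exists_shares_le {c d m : ℕ} (r : (Fin d → Bool) → Fin c → Bool)
    (hr : Function.Injective r) (A : (Fin m → ParPoint c d m) → PMF (Fin c → Bool)) :
    ∃ sh : Fin (m + 1) → Fin d → Bool,
      prOf ((iid (oneOutDist c d m r sh) m).bind A) {r (sOf sh)} ≤ (1 / 2 : ℝ≥0∞) ^ d := by
  have hpr : ∀ sh : Fin (m + 1) → Fin d → Bool,
      prOf ((iid (oneOutDist c d m r sh) m).bind A) {r (sOf sh)} =
        ∑ z, iid (oneOutDist c d m r sh) m z * A z (r (sOf sh)) := by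
    intro sh
    rw [prOf, PMF.toOuterMeasure_apply_singleton, PMF.bind_apply, tsum_fintype]
  have total : ∑ sh : Fin (m + 1) → Fin d → Bool,
      2 ^ d * prOf ((iid (oneOutDist c d m r sh) m).bind A) {r (sOf sh)} ≤
        ∑ _sh : Fin (m + 1) → Fin d → Bool, 1 := by
    calc _ = ∑ z, 2 ^ d * ∑ sh, iid (oneOutDist c d m r sh) m z * A z (r (sOf sh)) := by
          simp only [hpr, ← Finset.mul_sum]
          rw [Finset.sum_comm]
      _ ≤ ∑ z, ∑ sh, iid (oneOutDist c d m r sh) m z :=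
          Finset.sum_le_sum fun z _ => sum_iid_mul_le r hr (A z) z
      _ = _ := by
          rw [Finset.sum_comm]
          refine Finset.sum_congr rfl fun sh _ => ?_
          rw [← tsum_fintype (L := .unconditional _), PMF.tsum_coe]
  obtain ⟨sh, h⟩ : ∃ sh : Fin (m + 1) → Fin d → Bool,
      2 ^ d * prOf ((iid (oneOutDist c d m r sh) m).bind A) {r (sOf sh)} ≤ 1 := by
    by_contra! h
    exact total.not_gt (ENNReal.sum_lt_sum_of_nonempty Finset.univ_nonempty fun sh _ => h sh)
  refine ⟨sh, ?_⟩
  rw [one_div, ← ENNReal.inv_pow, ENNReal.le_inv_iff_mul_le, mul_comm]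
  exact h

/-- for `d ≤ c`, every (not necessarily private) randomized algorithm taking `m`
data points of the 1-out-of-`2^d`-parity task has an instance with pairwise distinct strings
`(r_j)_j` on which it outputs `r_s` with probability at most `2^{−d}`. In particular, for
`d ≥ 2` a trusted curator holding `m` examples cannot solve the task with success
probability `3/4`. -/
theorem stmt_14 (c d m : ℕ) (hdc : d ≤ c)
    (A : (Fin m → ParPoint c d m) → PMF (Fin c → Bool)) :
    (∃ (r : (Fin d → Bool) → Fin c → Bool) (sh : Fin (m + 1) → Fin d → Bool),
      Function.Injective r ∧
      prOf ((iid (oneOutDist c d m r sh) m).bind A) {r (sOf sh)} ≤ (1 / 2 : ℝ≥0∞) ^ d) ∧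
    (2 ≤ d →
      ¬ ∀ (r : (Fin d → Bool) → Fin c → Bool) (sh : Fin (m + 1) → Fin d → Bool),
        ENNReal.ofReal (3 / 4 : ℝ) ≤
          prOf ((iid (oneOutDist c d m r sh) m).bind A) {r (sOf sh)}) := by
  have first : ∃ (r : (Fin d → Bool) → Fin c → Bool) (sh : Fin (m + 1) → Fin d → Bool),
      Function.Injective r ∧
      prOf ((iid (oneOutDist c d m r sh) m).bind A) {r (sOf sh)} ≤ (1 / 2 : ℝ≥0∞) ^ d := by
    obtain ⟨r⟩ : Nonempty ((Fin d → Bool) ↪ (Fin c → Bool)) := by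
      refine Function.Embedding.nonempty_of_card_le ?_
      simpa using Nat.pow_le_pow_right two_pos hdc
    obtain ⟨sh, h⟩ := exists_shares_le r r.injective A
    exact ⟨r, sh, r.injective, h⟩
  refine ⟨first, fun hd hall => ?_⟩
  obtain ⟨r, sh, -, h⟩ := first
  have hlt : (1 / 2 : ℝ≥0∞) ^ d < ENNReal.ofReal (3 / 4) := by
    have hhalf : (1 / 2 : ℝ≥0∞) = ENNReal.ofReal (1 / 2) := by
      rw [ENNReal.ofReal_div_of_pos two_pos]
      simp
    rw [hhalf, ← ENNReal.ofReal_pow (by norm_num), ENNReal.ofReal_lt_ofReal_iff (by norm_num)]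
    calc (1 / 2 : ℝ) ^ d ≤ (1 / 2) ^ 2 := pow_le_pow_of_le_one (by norm_num) (by norm_num) hd
      _ < 3 / 4 := by norm_num
  exact absurd ((hall r sh).trans h) hlt.not_ge
end

section
/- Let c, m ∈ ℕ. For every (not necessarily differentially private) randomized algorithm A taking m data points of the parity-chooses-secret task and outputting a bit, there exists an instance — a string r ∈ {0,1}^c and bits s_{j,1},…,s_{j,m+1} for each j ∈ {0,1}^c — such that the probability that A outputs the bit s_r is at most 1/2, where the probability is over the m i.i.d. data points generated from the instance and A's coins. In particular, a trusted curator holding only m examples cannot solve the parity-chooses-secret task with success probability 3/4. -/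
open scoped ENNReal

/-- A data point of the parity-chooses-secret task: `(x, ⟨x,r⟩ mod 2, t, (s_{j,t})_j)`. -/
abbrev PCSPoint (c m : ℕ) : Type :=
  (Fin c → Bool) × Bool × Fin (m + 1) × ((Fin c → Bool) → Bool)

/-- The data-point distribution of the parity-chooses-secret task. -/
noncomputable def pcsDist (c m : ℕ) (r : Fin c → Bool)
    (sh : (Fin c → Bool) → Fin (m + 1) → Bool) : PMF (PCSPoint c m) :=
  (PMF.uniformOfFintype (Fin c → Bool)).bind fun x =>
    (PMF.uniformOfFintype (Fin (m + 1))).map fun t => (x, Par r x, t, fun j => sh j t)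

theorem iid_map {Y Z : Type*} (D : PMF Y) (g : Y → Z) (n : ℕ) :
    iid (D.map g) n = (iid D n).map (fun w i => g (w i)) := by
  induction n with
  | zero =>
    simp only [iid, PMF.pure_map]
    congr 1
    funext i
    exact i.elim0
  | succ n ih =>
    simp only [iid, ih, PMF.bind_map, PMF.map_bind, PMF.pure_map, Function.comp_def]
    congr 1
    funext w
    congr 1
    funext z
    congr 1
    funext i
    refine Fin.cases ?_ (fun j => ?_) i <;> simp

/-- Negating a single bit negates the XOR of the family. -/
theorem xorFold_update_not {I : Type*} [Fintype I] [DecidableEq I] (u : I → Bool) (a : I) :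
    xorFold (Function.update u a (!u a)) = !xorFold u := by
  have h : ∀ v : I → Bool, (Finset.univ.filter (fun i => v i = true)).card =
      (if v a = true then 1 else 0) +
        ∑ i ∈ Finset.univ.erase a, if v i = true then 1 else 0 := fun v => by
    rw [Finset.card_filter,
      Finset.add_sum_erase _ (fun i => if v i = true then 1 else 0) (Finset.mem_univ a)]
  have he : (∑ i ∈ Finset.univ.erase a,
      if Function.update u a (!u a) i = true then 1 else 0) =
      ∑ i ∈ Finset.univ.erase a, if u i = true then 1 else 0 :=
    Finset.sum_congr rfl fun i hi => by
      rw [Function.update_of_ne (Finset.ne_of_mem_erase hi)]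
  unfold xorFold
  rw [h, h u, he, Function.update_self]
  generalize (∑ i ∈ Finset.univ.erase a, if u i = true then 1 else 0) = k
  rw [← decide_not, decide_eq_decide]
  cases u a <;> simp <;> omega

/-- A guess of the XOR of a uniformly random family of bits that ignores one of the bits is
right for exactly half of the families. -/
theorem sum_apply_xorFold_of_update_eq {I : Type*} [Fintype I] [DecidableEq I]
    (B : (I → Bool) → PMF Bool) (a : I) (hB : ∀ u b, B (Function.update u a b) = B u) :
    ∑ u, B u (xorFold u) + ∑ u, B u (xorFold u) = ∑ _u : I → Bool, (1 : ℝ≥0∞) := by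
  have hinv : Function.Involutive fun u : I → Bool => Function.update u a (!u a) := fun u => by
    simp
  have hflip : ∑ u, B u (xorFold u) = ∑ u, B u (!xorFold u) := by
    rw [← Equiv.sum_comp hinv.toPerm]
    refine Finset.sum_congr rfl fun u _ => ?_
    simp only [Function.Involutive.coe_toPerm, xorFold_update_not, hB]
  nth_rewrite 2 [hflip]
  rw [← Finset.sum_add_distrib]
  refine Finset.sum_congr rfl fun u _ => ?_
  have h1 := (B u).tsum_coe
  rw [tsum_fintype, Fintype.sum_bool] at h1
  cases xorFold u
  · rwa [add_comm] at h1
  · exact h1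

/-- The data point produced from the randomness `(x, t)` when all secrets share the bits `u`. -/
def pcsPointOfSeed {c m : ℕ} (r : Fin c → Bool) (u : Fin (m + 1) → Bool)
    (w : (Fin c → Bool) × Fin (m + 1)) : PCSPoint c m :=
  (w.1, Par r w.1, w.2, fun _ => u w.2)

/-- The distribution of the randomness `(x, t)` underlying a data point. -/
noncomputable def pcsSeed (c m : ℕ) : PMF ((Fin c → Bool) × Fin (m + 1)) :=
  (PMF.uniformOfFintype (Fin c → Bool)).bind fun x =>
    (PMF.uniformOfFintype (Fin (m + 1))).map fun t => (x, t)

theorem pcsDist_eq_map_pcsSeed (c m : ℕ) (r : Fin c → Bool) (u : Fin (m + 1) → Bool) :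
    pcsDist c m r (fun _ => u) = (pcsSeed c m).map (pcsPointOfSeed r u) := by
  simp only [pcsDist, pcsSeed, PMF.map_bind, PMF.map_comp]
  rfl

theorem prOf_iid_pcsDist_bind (c m : ℕ) (A : (Fin m → PCSPoint c m) → PMF Bool)
    (r : Fin c → Bool) (u : Fin (m + 1) → Bool) (b : Bool) :
    prOf ((iid (pcsDist c m r (fun _ => u)) m).bind A) {b} =
      ∑ w, iid (pcsSeed c m) m w * A (fun i => pcsPointOfSeed r u (w i)) b := by
  rw [prOf, PMF.toOuterMeasure_apply_singleton, pcsDist_eq_map_pcsSeed, iid_map, PMF.bind_map,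
    PMF.bind_apply, tsum_fintype]
  rfl

/-- On average over the shared bits, `m` data points determine the secret no better than a
fair coin. -/
theorem sum_prOf_iid_pcsDist (c m : ℕ) (A : (Fin m → PCSPoint c m) → PMF Bool)
    (r : Fin c → Bool) :
    ∑ u, prOf ((iid (pcsDist c m r (fun _ => u)) m).bind A) {xorFold u} +
        ∑ u, prOf ((iid (pcsDist c m r (fun _ => u)) m).bind A) {xorFold u} =
      ∑ _u : Fin (m + 1) → Bool, (1 : ℝ≥0∞) := by
  simp only [prOf_iid_pcsDist_bind]
  rw [Finset.sum_comm, ← Finset.sum_add_distrib]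
  simp only [← Finset.mul_sum, ← mul_add]
  have hw : ∀ w : Fin m → (Fin c → Bool) × Fin (m + 1),
      ∑ u, A (fun i => pcsPointOfSeed r u (w i)) (xorFold u) +
        ∑ u, A (fun i => pcsPointOfSeed r u (w i)) (xorFold u) =
      ∑ _u : Fin (m + 1) → Bool, (1 : ℝ≥0∞) := fun w => by
    obtain ⟨a, ha⟩ : ∃ a, ∀ i, (w i).2 ≠ a := by
      by_contra! h
      simpa using Fintype.card_le_of_surjective (fun i => (w i).2) h
    refine sum_apply_xorFold_of_update_eq
      (fun u => A (fun i => pcsPointOfSeed r u (w i))) a fun u b => ?_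
    simp only [pcsPointOfSeed, Function.update_of_ne (ha _)]
  simp only [hw]
  rw [← Finset.sum_mul, ← tsum_fintype (L := .unconditional _), PMF.tsum_coe, one_mul]

/-- every (not necessarily private) randomized algorithm taking `m` data points
of the parity-chooses-secret task and outputting a bit has an instance on which it outputs the
secret bit `s_r` with probability at most `1/2`. In particular, a trusted curator holding only
`m` examples cannot solve the task with success probability `3/4`. -/
theorem stmt_15 (c m : ℕ)
    (A : (Fin m → PCSPoint c m) → PMF Bool) :
    (∃ (r : Fin c → Bool) (sh : (Fin c → Bool) → Fin (m + 1) → Bool),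
      prOf ((iid (pcsDist c m r sh) m).bind A) {xorFold (sh r)} ≤ (1 / 2 : ℝ≥0∞)) ∧
    ¬ ∀ (r : Fin c → Bool) (sh : (Fin c → Bool) → Fin (m + 1) → Bool),
      ENNReal.ofReal (3 / 4 : ℝ) ≤
        prOf ((iid (pcsDist c m r sh) m).bind A) {xorFold (sh r)} := by
  have hex : ∃ (r : Fin c → Bool) (sh : (Fin c → Bool) → Fin (m + 1) → Bool),
      prOf ((iid (pcsDist c m r sh) m).bind A) {xorFold (sh r)} ≤ (1 / 2 : ℝ≥0∞) := by
    by_contra! h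
    have hlt := ENNReal.sum_lt_sum_of_nonempty (Finset.univ_nonempty (α := Fin (m + 1) → Bool))
      fun u _ => h (fun _ => false) fun _ => u
    have hsum := ENNReal.add_lt_add hlt hlt
    rw [sum_prOf_iid_pcsDist, ← Finset.sum_add_distrib, ENNReal.add_halves] at hsum
    exact hsum.false
  refine ⟨hex, fun h => ?_⟩
  obtain ⟨r, sh, hr⟩ := hex
  have hle := (h r sh).trans hr
  rw [ENNReal.ofReal_le_iff_le_toReal (by simp)] at hle
  norm_num at hle
end
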